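/- Let A be a finite dimensional k-algebra such that M_n(A) is a Frobenius algebra for some positive integer n. Then A is a Frobenius algebra. -/

import Mathlib

/-- A finite dimensional `k`-algebra `R` is Frobenius if `R ≅ R* = Hom_k(R,k)` as left
`R`-modules, the left `R`-action on the dual being `(a • f) y = f (y * a)`. -/
def IsFrobeniusAlgebra (k R : Type*) [Field k] [Ring R] [Algebra k R] : Prop :=
  ∃ φ : R ≃ₗ[k] Module.Dual k R, ∀ a x y : R, φ (a * x) y = φ x (y * a)

section FrobAux

universe u v w

/-- The dual of `A`, to be viewed as a left `A`-module. -/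
def FrobDual (k : Type u) (A : Type v) [Field k] [Ring A] [Algebra k A] : Type (max u v) :=
  Module.Dual k A

section
variable {k : Type u} {A : Type v} [Field k] [Ring A] [Algebra k A]

instance : AddCommGroup (FrobDual k A) := inferInstanceAs (AddCommGroup (Module.Dual k A))
instance : Module k (FrobDual k A) := inferInstanceAs (Module k (Module.Dual k A))
instance [FiniteDimensional k A] : FiniteDimensional k (FrobDual k A) :=
  inferInstanceAs (FiniteDimensional k (Module.Dual k A))

/-- Evaluation. -/
def FrobDual.toDual : FrobDual k A ≃ₗ[k] Module.Dual k A := LinearEquiv.refl k _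

instance : SMul A (FrobDual k A) :=
  ⟨fun a f => FrobDual.toDual.symm ((FrobDual.toDual f).comp (LinearMap.mulRight k a))⟩

theorem FrobDual.smul_apply (a : A) (f : FrobDual k A) (y : A) :
    FrobDual.toDual (a • f) y = FrobDual.toDual f (y * a) := rfl

theorem FrobDual.ext {f g : FrobDual k A}
    (h : ∀ y, FrobDual.toDual f y = FrobDual.toDual g y) : f = g :=
  FrobDual.toDual.injective (LinearMap.ext h)

instance : Module A (FrobDual k A) where
  one_smul f := FrobDual.ext fun y => by simp [FrobDual.smul_apply]
  mul_smul a b f := FrobDual.ext fun y => by simp [FrobDual.smul_apply, mul_assoc]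
  smul_zero a := FrobDual.ext fun y => by simp [FrobDual.smul_apply]
  smul_add a f g := FrobDual.ext fun y => by simp [FrobDual.smul_apply]
  add_smul a b f := FrobDual.ext fun y => by simp [FrobDual.smul_apply, mul_add]
  zero_smul f := FrobDual.ext fun y => by simp [FrobDual.smul_apply]

instance : IsScalarTower k A (FrobDual k A) :=
  ⟨fun c a f => FrobDual.ext fun y => by simp [FrobDual.smul_apply]⟩

end

section
variable (k : Type*) {A : Type*} [Field k] [Ring A] [Algebra k A]

theorem frob_hom_finite (M T : Type*) [AddCommGroup M] [Module k M] [Module A M]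
    [IsScalarTower k A M] [FiniteDimensional k M]
    [AddCommGroup T] [Module k T] [Module A T] [IsScalarTower k A T] [FiniteDimensional k T] :
    Module.Finite k (M →ₗ[A] T) :=
  Module.Finite.of_injective (LinearMap.restrictScalarsₗ k A M T k)
    (LinearMap.restrictScalars_injective k)

theorem frob_finrank_congr {M M' : Type*} (T : Type*) [AddCommGroup M] [Module A M]
    [AddCommGroup M'] [Module A M']
    [AddCommGroup T] [Module k T] [Module A T] [IsScalarTower k A T] (e : M ≃ₗ[A] M') :
    Module.finrank k (M →ₗ[A] T) = Module.finrank k (M' →ₗ[A] T) :=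
  LinearEquiv.finrank_eq (LinearEquiv.congrLeft T k e)

theorem frob_finrank_prod (M M' : Type*) (T : Type*) [AddCommGroup M] [Module A M]
    [AddCommGroup M'] [Module A M'] [Module k M] [Module k M']
    [IsScalarTower k A M] [IsScalarTower k A M'] [FiniteDimensional k M] [FiniteDimensional k M']
    [AddCommGroup T] [Module k T] [Module A T] [IsScalarTower k A T] [FiniteDimensional k T] :
    Module.finrank k (M × M' →ₗ[A] T) =
      Module.finrank k (M →ₗ[A] T) + Module.finrank k (M' →ₗ[A] T) := by
  have := frob_hom_finite k (A := A) M T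
  have := frob_hom_finite k (A := A) M' T
  rw [← LinearEquiv.finrank_eq (LinearMap.coprodEquiv (R := A) (M := M) (M₂ := M') (M₃ := T) k),
    Module.finrank_prod]

end

/-- Semisimple comparison. -/
theorem frob_semisimple {k : Type*} {A : Type*} [Field k] [Ring A] [Algebra k A] (d : ℕ) :
    ∀ (M : Type u) (N : Type v) [AddCommGroup M] [AddCommGroup N] [Module k M] [Module k N]
    [Module A M] [Module A N] [IsScalarTower k A M] [IsScalarTower k A N]
    [FiniteDimensional k M] [FiniteDimensional k N]
    [IsSemisimpleModule A M] [IsSemisimpleModule A N], Module.finrank k N = d →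
    (∀ (T : Type v) [AddCommGroup T] [Module k T] [Module A T] [IsScalarTower k A T]
      [FiniteDimensional k T], IsSimpleModule A T →
      Module.finrank k (N →ₗ[A] T) ≤ Module.finrank k (M →ₗ[A] T)) →
    ∃ g : M →ₗ[A] N, Function.Surjective g := by
  induction d using Nat.strong_induction_on with
  | _ d ih =>
  intro M N _ _ _ _ _ _ _ _ _ _ _ _ hd H
  rcases subsingleton_or_nontrivial N with hN | hN
  · exact ⟨0, fun y => ⟨0, Subsingleton.elim _ _⟩⟩
  obtain ⟨S, -, hS⟩ := (IsSemisimpleModule.eq_bot_or_exists_simple_le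
    (⊤ : Submodule A N)).resolve_left top_ne_bot
  have := hS
  obtain ⟨N', hN'⟩ := exists_isCompl S
  have : FiniteDimensional k S :=
    inferInstanceAs (FiniteDimensional k (S.restrictScalars k))
  have : FiniteDimensional k N' :=
    inferInstanceAs (FiniteDimensional k (N'.restrictScalars k))
  let eN := S.prodEquivOfIsCompl N' hN'
  have hNT : ∀ (T : Type v) [AddCommGroup T] [Module k T] [Module A T] [IsScalarTower k A T]
      [FiniteDimensional k T], Module.finrank k (N →ₗ[A] T) =
      Module.finrank k (S →ₗ[A] T) + Module.finrank k (N' →ₗ[A] T) := by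
    intro T _ _ _ _ _
    rw [← frob_finrank_congr k T eN, frob_finrank_prod]
  have hpos : 0 < Module.finrank k (S →ₗ[A] S) := by
    have := frob_hom_finite k (A := A) S S
    have := IsSimpleModule.nontrivial A S
    have : Nontrivial (S →ₗ[A] S) := ⟨⟨0, LinearMap.id, fun h => by
      obtain ⟨x, hx⟩ := exists_ne (0 : S)
      exact hx (LinearMap.congr_fun h x).symm⟩⟩
    exact Module.finrank_pos
  have hMS : 0 < Module.finrank k (M →ₗ[A] S) := by
    have := H S hS
    rw [hNT] at this
    omega
  obtain ⟨f, hf⟩ : ∃ f : M →ₗ[A] S, f ≠ 0 := by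
    by_contra! hc
    have : Subsingleton (M →ₗ[A] S) := ⟨fun a b => by rw [hc a, hc b]⟩
    rw [Module.finrank_zero_of_subsingleton] at hMS
    omega
  have hfs := f.surjective_of_ne_zero hf
  obtain ⟨C, hC⟩ := exists_isCompl (LinearMap.ker f)
  let M' := LinearMap.ker f
  have : FiniteDimensional k M' :=
    inferInstanceAs (FiniteDimensional k (M'.restrictScalars k))
  let eC : C ≃ₗ[A] S :=
    (Submodule.quotientEquivOfIsCompl _ C hC).symm.trans (f.quotKerEquivOfSurjective hfs)
  let eM : (S × M') ≃ₗ[A] M :=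
    (LinearEquiv.prodCongr eC.symm (LinearEquiv.refl A M')).trans
      (C.prodEquivOfIsCompl M' hC.symm)
  have hlt : Module.finrank k N' < d := by
    have h1 : Module.finrank k (S × N') = Module.finrank k N :=
      LinearEquiv.finrank_eq (eN.restrictScalars k)
    rw [Module.finrank_prod] at h1
    have := IsSimpleModule.nontrivial A S
    have : 0 < Module.finrank k S := Module.finrank_pos
    omega
  obtain ⟨g, hg⟩ := ih _ hlt M' N' rfl (by
    intro T _ _ _ _ _ hT
    have h1 := H T hT
    rw [hNT, ← frob_finrank_congr k T eM, frob_finrank_prod] at h1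
    omega)
  refine ⟨eN.toLinearMap ∘ₗ (LinearMap.prodMap LinearMap.id g) ∘ₗ eM.symm.toLinearMap, ?_⟩
  simp only [LinearMap.coe_comp, LinearEquiv.coe_coe]
  refine eN.surjective.comp (Function.Surjective.comp ?_ eM.symm.surjective)
  rintro ⟨s, y⟩
  obtain ⟨x, rfl⟩ := hg y
  exact ⟨(s, x), rfl⟩

/-- Homs to a simple module factor through the radical quotient. -/
theorem frob_rad (k : Type*) {A : Type*} [Field k] [Ring A] [Algebra k A]
    (M T : Type*) [AddCommGroup M] [Module A M]
    [AddCommGroup T] [Module k T] [Module A T] [IsScalarTower k A T] [hT : IsSimpleModule A T] :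
    Module.finrank k ((M ⧸ Module.jacobson A M) →ₗ[A] T) = Module.finrank k (M →ₗ[A] T) := by
  refine LinearEquiv.finrank_eq (LinearEquiv.ofBijective
    (LinearMap.lcomp k T (Module.jacobson A M).mkQ) ⟨?_, ?_⟩)
  · intro a b h
    exact Submodule.linearMap_qext _ h
  · intro f
    refine ⟨(Module.jacobson A M).liftQ f ?_, ?_⟩
    · intro x hx
      have := Module.le_comap_jacobson f hx
      rw [IsSemisimpleModule.jacobson_eq_bot A T] at this
      simpa using this
    · ext x
      rfl

theorem frob_hom_le (k : Type*) {A : Type*} {M N T : Type*} [Field k] [Ring A] [Algebra k A]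
    [AddCommGroup M] [Module k M] [Module A M] [IsScalarTower k A M] [FiniteDimensional k M]
    [AddCommGroup N] [Module k N] [Module A N] [IsScalarTower k A N] [FiniteDimensional k N]
    [AddCommGroup T] [Module k T] [Module A T] [IsScalarTower k A T] [FiniteDimensional k T]
    (n : ℕ) (hn : 0 < n)
    (g : (Fin n → M) →ₗ[A] (Fin n → N)) (hg : Function.Surjective g) :
    Module.finrank k (N →ₗ[A] T) ≤ Module.finrank k (M →ₗ[A] T) := by
  have := frob_hom_finite k (A := A) M T
  have := frob_hom_finite k (A := A) N T
  have hM : Module.finrank k ((Fin n → M) →ₗ[A] T) = n * Module.finrank k (M →ₗ[A] T) := by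
    rw [← LinearEquiv.finrank_eq (LinearMap.lsum A (fun _ : Fin n => M) k (M := T)),
      Module.finrank_pi_fintype]
    simp
  have hN : Module.finrank k ((Fin n → N) →ₗ[A] T) = n * Module.finrank k (N →ₗ[A] T) := by
    rw [← LinearEquiv.finrank_eq (LinearMap.lsum A (fun _ : Fin n => N) k (M := T)),
      Module.finrank_pi_fintype]
    simp
  have := frob_hom_finite k (A := A) (Fin n → M) T
  have := LinearMap.finrank_le_finrank_of_injective (f := LinearMap.lcomp k T g)
    (fun a b h => LinearMap.ext fun y => by
      obtain ⟨x, rfl⟩ := hg y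
      exact LinearMap.congr_fun h x)
  rw [hM, hN] at this
  exact Nat.le_of_mul_le_mul_left this hn

theorem frob_lift {A : Type*} {M N : Type*} [Ring A]
    [AddCommGroup M] [Module A M] [Module.Projective A M]
    [AddCommGroup N] [Module A N] [Module.Finite A N]
    (p : (M ⧸ Module.jacobson A M) →ₗ[A] (N ⧸ Module.jacobson A N))
    (hp : Function.Surjective p) :
    ∃ f : M →ₗ[A] N, Function.Surjective f := by
  obtain ⟨f, hf⟩ := Module.projective_lifting_property (Module.jacobson A N).mkQ
    (p ∘ₗ (Module.jacobson A M).mkQ) (Submodule.mkQ_surjective _)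
  refine ⟨f, LinearMap.range_eq_top.1 ?_⟩
  by_contra hr
  obtain ⟨m, hm, hle⟩ := (eq_top_or_exists_le_coatom (LinearMap.range f)).resolve_left hr
  apply hm.1
  rw [eq_top_iff]
  intro y _
  obtain ⟨x, hx⟩ := (hp.comp (Submodule.mkQ_surjective _)) ((Module.jacobson A N).mkQ y)
  have h1 : (Module.jacobson A N).mkQ (f x) = (Module.jacobson A N).mkQ y := by
    rw [← hx]
    exact LinearMap.congr_fun hf x
  have h2 : f x - y ∈ Module.jacobson A N := (Submodule.Quotient.eq _).1 h1
  have h3 : f x - y ∈ m := (sInf_le (show m ∈ {m : Submodule A N | IsCoatom m} from hm)) h2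
  have h4 := m.sub_mem (hle ⟨x, rfl⟩) h3
  simpa using h4

theorem frob_quot_semisimple (k : Type*) {A : Type*} (M : Type*)
    [Field k] [Ring A] [Algebra k A] [FiniteDimensional k A]
    [AddCommGroup M] [Module k M] [Module A M] [IsScalarTower k A M]
    [FiniteDimensional k M] : IsSemisimpleModule A (M ⧸ Module.jacobson A M) := by
  have : Module.Finite A M := Module.Finite.of_restrictScalars_finite k A M
  have : IsArtinianRing A := IsArtinianRing.of_finite k A
  exact (IsArtinian.isSemisimpleModule_iff_jacobson A _).2 (Module.jacobson_quotient_jacobson A M)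

theorem frob_quot_finite (k : Type*) {A : Type*} (M : Type*)
    [Field k] [Ring A] [Algebra k A]
    [AddCommGroup M] [Module k M] [Module A M] [IsScalarTower k A M]
    [FiniteDimensional k M] : FiniteDimensional k (M ⧸ Module.jacobson A M) := by
  generalize Module.jacobson A M = J
  let f : M →ₗ[k] (M ⧸ J) := J.mkQ.restrictScalars k
  have hf : Function.Surjective f := J.mkQ_surjective
  exact Module.Finite.of_surjective f hf

theorem frob_cyclic {k : Type*} {A : Type*} {M : Type u} {N : Type v}
    [Field k] [Ring A] [Algebra k A] [FiniteDimensional k A]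
    [AddCommGroup M] [Module k M] [Module A M] [IsScalarTower k A M]
    [FiniteDimensional k M] [Module.Projective A M]
    [AddCommGroup N] [Module k N] [Module A N] [IsScalarTower k A N]
    [FiniteDimensional k N] (n : ℕ) (hn : 0 < n)
    (g : (Fin n → M) →ₗ[A] (Fin n → N)) (hg : Function.Surjective g) :
    ∃ f : M →ₗ[A] N, Function.Surjective f := by
  have : Module.Finite A N := Module.Finite.of_restrictScalars_finite k A N
  have := frob_quot_semisimple k (A := A) M
  have := frob_quot_semisimple k (A := A) N
  have := frob_quot_finite k (A := A) M
  have := frob_quot_finite k (A := A) N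
  have key : ∀ (T : Type v) [AddCommGroup T] [Module k T] [Module A T] [IsScalarTower k A T]
      [FiniteDimensional k T], IsSimpleModule A T →
      Module.finrank k ((N ⧸ Module.jacobson A N) →ₗ[A] T) ≤
        Module.finrank k ((M ⧸ Module.jacobson A M) →ₗ[A] T) := by
    intro T _ _ _ _ _ hT
    have h1 := frob_rad k (A := A) M T
    have h2 := frob_rad k (A := A) N T
    have h3 := frob_hom_le k (T := T) n hn g hg
    exact h2.le.trans (h3.trans h1.ge)
  obtain ⟨p, hp⟩ := frob_semisimple (k := k) (A := A)
    (Module.finrank k (N ⧸ Module.jacobson A N)) (M ⧸ Module.jacobson A M)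
    (N ⧸ Module.jacobson A N) rfl key
  exact frob_lift p hp

end FrobAux

/-- if `A` is a finite dimensional `k`-algebra such that `M_n(A)` is a
Frobenius algebra for some positive integer `n`, then `A` is a Frobenius algebra. -/
theorem frobenius_of_matrix_frobenius
    {k A : Type*} [Field k] [Ring A] [Algebra k A] [FiniteDimensional k A]
    (n : ℕ) (hn : 0 < n)
    (h : IsFrobeniusAlgebra k (Matrix (Fin n) (Fin n) A)) :
    IsFrobeniusAlgebra k A := by
  obtain ⟨φ, hφ⟩ := h
  let z : Fin n := ⟨0, hn⟩
  let E : (Fin n → A) →ₗ[k] Matrix (Fin n) (Fin n) A :=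
    { toFun := fun v => Matrix.of fun i j => if i = z then v j else 0
      map_add' := fun v w => by ext i j; by_cases hi : i = z <;> simp [hi]
      map_smul' := fun c v => by ext i j; by_cases hi : i = z <;> simp [hi] }
  have hE : ∀ (a : A) (v : Fin n → A), E (a • v) = Matrix.single z z a * E v := by
    intro a v
    ext i j
    by_cases hi : i = z
    · subst hi
      simp [E]
    · simp [E, hi, Matrix.single_mul_apply_of_ne]
  let G : (Fin n → A) →ₗ[A] (Fin n → FrobDual k A) :=
    { toFun := fun v i => FrobDual.toDual.symm
        ((φ (E v)).comp (Matrix.singleLinearMap k i z))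
      map_add' := fun v w => by
        funext i
        refine FrobDual.ext fun y => ?_
        simp
      map_smul' := fun a v => by
        funext i
        refine FrobDual.ext fun y => ?_
        simp [FrobDual.smul_apply, hE, hφ] }
  have hGi : Function.Injective G := by
    rw [injective_iff_map_eq_zero]
    intro v hv
    have h1 : ∀ i y, φ (E v) (Matrix.single i z y) = 0 := fun i y =>
      congrArg (fun f => FrobDual.toDual f y) (congrFun hv i)
    have h2 : φ (E v) = 0 := by
      ext Y
      have h3 := hE 1 v
      rw [one_smul] at h3
      rw [h3, hφ]
      have h4 : Y * Matrix.single z z 1 = ∑ i, Matrix.single i z (Y i z) := by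
        ext a b
        rw [Matrix.sum_apply]
        by_cases hb : b = z
        · subst hb
          simp [Matrix.single_apply]
        · simp [Ne.symm hb, Matrix.mul_apply]
      rw [h4, map_sum]
      simp [h1]
    have h5 : E v = 0 := by simpa using h2
    funext j
    have := congrFun (congrFun h5 z) j
    simpa [E] using this
  have hdim : Module.finrank k (FrobDual k A) = Module.finrank k A :=
    Subspace.dual_finrank_eq
  have hGs : Function.Surjective G := by
    have := (LinearMap.injective_iff_surjective_of_finrank_eq_finrank
      (f := G.restrictScalars k) (by simp [Module.finrank_pi_fintype, hdim])).1 hGi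
    exact this
  obtain ⟨f, hf⟩ := frob_cyclic (k := k) n hn G hGs
  have hfi : Function.Injective f :=
    (LinearMap.injective_iff_surjective_of_finrank_eq_finrank
      (f := f.restrictScalars k) hdim.symm).2 hf
  refine ⟨(LinearEquiv.ofBijective (f.restrictScalars k) ⟨hfi, hf⟩).trans FrobDual.toDual, ?_⟩
  intro a x y
  have : f (a * x) = a • f x := f.map_smul a x
  change FrobDual.toDual (f (a * x)) y = FrobDual.toDual (f x) (y * a)
  rw [this, FrobDual.smul_apply]
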